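/- Let c > 0, let 𝒜⁰ : ℝ × ℝ³ → ℝ and 𝓐 : ℝ × ℝ³ → ℝ³ be C² with 𝓐(t, ·) supported in a fixed compact set 𝒦 ⊂ ℝ³ for all t in an open interval I, let θ : ℝ × ℝ³ → ℝ be C¹, and suppose the non-relativistic (γ ≡ 1) barotropic equation of motion ℰ + (v/c)×ℬ = −c⁻¹ ∇θ holds everywhere, where ℰ = −∇𝒜⁰ − c⁻¹∂_t𝓐, ℬ = ∇×𝓐, and v : ℝ × ℝ³ → ℝ³ is any velocity field. Then the helicity C(t) = ∫_{ℝ³} (𝓐·ℬ)(t, x) d³x is constant on I. -/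

import Mathlib

open MeasureTheory

noncomputable section

abbrev V3 := Fin 3 → ℝ

/-- Euclidean dot product on ℝ³. -/
def dot3 (a b : V3) : ℝ := ∑ i, a i * b i

/-- Cross product on ℝ³. -/
def cross3 (a b : V3) : V3 := fun i => a (i + 1) * b (i + 2) - a (i + 2) * b (i + 1)

/-- Time derivative ∂_t of a scalar function on ℝ × ℝ³. -/
def pdt (f : ℝ × V3 → ℝ) (p : ℝ × V3) : ℝ := fderiv ℝ f p ((1 : ℝ), (0 : V3))

/-- Spatial derivative ∂_j of a scalar function on ℝ × ℝ³. -/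
def pdx (j : Fin 3) (f : ℝ × V3 → ℝ) (p : ℝ × V3) : ℝ :=
  fderiv ℝ f p ((0 : ℝ), Pi.single j 1)

/-- Spatial gradient. -/
def grad3 (f : ℝ × V3 → ℝ) (p : ℝ × V3) : V3 := fun j => pdx j f p

/-- Spatial curl. -/
def curl3 (A : ℝ × V3 → V3) (p : ℝ × V3) : V3 := fun i =>
  pdx (i + 1) (fun q => A q (i + 2)) p - pdx (i + 2) (fun q => A q (i + 1)) p

/-- Spatial divergence. -/
def div3 (A : ℝ × V3 → V3) (p : ℝ × V3) : ℝ := ∑ j, pdx j (fun q => A q j) p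

/-- ℰ = −∇𝒜⁰ − c⁻¹ ∂_t 𝓐. -/
def Efield (c : ℝ) (A0 : ℝ × V3 → ℝ) (A : ℝ × V3 → V3) (p : ℝ × V3) : V3 := fun i =>
  -grad3 A0 p i - c⁻¹ * fderiv ℝ (fun q => A q i) p ((1 : ℝ), (0 : V3))

/-- ℬ = ∇×𝓐. -/
def Bfield (A : ℝ × V3 → V3) (p : ℝ × V3) : V3 := curl3 A p

/-- The semi-relativistic helicity C(t) = ∫_{ℝ³} 𝓐·ℬ d³x. -/
def semiHelicity (A : ℝ × V3 → V3) (t : ℝ) : ℝ :=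
  ∫ x : V3, dot3 (A (t, x)) (Bfield A (t, x))

def DD (w : ℝ × V3) (f : ℝ × V3 → ℝ) (p : ℝ × V3) : ℝ := fderiv ℝ f p w

lemma DD_mul {f g : ℝ × V3 → ℝ} (hf : ContDiff ℝ 1 f) (hg : ContDiff ℝ 1 g) (w p) :
    DD w (fun q => f q * g q) p = f p * DD w g p + DD w f p * g p := by
  have h1 := (hf.differentiable one_ne_zero) p
  have h2 := (hg.differentiable one_ne_zero) p
  unfold DD
  rw [fderiv_fun_mul h1 h2]
  simp
  ring

lemma DD_add {f g : ℝ × V3 → ℝ} (hf : ContDiff ℝ 1 f) (hg : ContDiff ℝ 1 g) (w p) :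
    DD w (fun q => f q + g q) p = DD w f p + DD w g p := by
  have h1 := (hf.differentiable one_ne_zero) p
  have h2 := (hg.differentiable one_ne_zero) p
  unfold DD
  rw [fderiv_fun_add h1 h2]
  simp

lemma DD_sub {f g : ℝ × V3 → ℝ} (hf : ContDiff ℝ 1 f) (hg : ContDiff ℝ 1 g) (w p) :
    DD w (fun q => f q - g q) p = DD w f p - DD w g p := by
  have h1 := (hf.differentiable one_ne_zero) p
  have h2 := (hg.differentiable one_ne_zero) p
  unfold DD
  rw [fderiv_fun_sub h1 h2]
  simp

lemma DD_const_mul {f : ℝ × V3 → ℝ} (hf : ContDiff ℝ 1 f) (k : ℝ) (w p) :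
    DD w (fun q => k * f q) p = k * DD w f p := by
  have h1 := (hf.differentiable one_ne_zero) p
  unfold DD
  rw [fderiv_const_mul h1]
  simp

lemma DD_contDiff {f : ℝ × V3 → ℝ} (hf : ContDiff ℝ 2 f) (w) : ContDiff ℝ 1 (DD w f) := by
  have : ContDiff ℝ 1 (fderiv ℝ f) := hf.fderiv_right (by norm_num)
  exact this.clm_apply contDiff_const

lemma DD_cont {f : ℝ × V3 → ℝ} (hf : ContDiff ℝ 1 f) (w) : Continuous (DD w f) := by
  have : Continuous (fderiv ℝ f) := hf.continuous_fderiv one_ne_zero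
  exact this.clm_apply continuous_const

lemma DD_comm {f : ℝ × V3 → ℝ} (hf : ContDiff ℝ 2 f) (w w' p) :
    DD w (DD w' f) p = DD w' (DD w f) p := by
  have h : ContDiff ℝ 1 (fderiv ℝ f) := hf.fderiv_right (by norm_num)
  have hd := (h.differentiable one_ne_zero) p
  have key : ∀ w w', DD w (DD w' f) p = fderiv ℝ (fderiv ℝ f) p w w' := by
    intro w w'
    have : HasFDerivAt (DD w' f) ((fderiv ℝ (fderiv ℝ f) p).flip w') p := by
      have := hd.hasFDerivAt.clm_apply (hasFDerivAt_const w' p)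
      simp at this
      exact this
    unfold DD at this ⊢
    rw [this.fderiv]
    simp
  rw [key, key]
  exact (hf.contDiffAt.isSymmSndFDerivAt (by simp)) w w'

/-- vanishing outside the compact set -/
def ZZ (a b : ℝ) (K : Set V3) (f : ℝ × V3 → ℝ) : Prop :=
  ∀ t ∈ Set.Ioo a b, ∀ x : V3, x ∉ K → f (t, x) = 0

lemma ZZ.DD {a b : ℝ} {K : Set V3} (hK : IsCompact K) {f : ℝ × V3 → ℝ} (h : ZZ a b K f) (w) :
    ZZ a b K (DD w f) := by
  intro t ht x hx
  have ho : IsOpen (Set.Ioo a b ×ˢ Kᶜ) := isOpen_Ioo.prod hK.isClosed.isOpen_compl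
  have : f =ᶠ[nhds (t, x)] fun _ => 0 := by
    filter_upwards [ho.mem_nhds (Set.mk_mem_prod ht hx)] with q hq
    exact h q.1 hq.1 q.2 hq.2
  unfold _root_.DD
  rw [this.fderiv_eq]
  simp

lemma slice_cs {a b : ℝ} {K : Set V3} (hK : IsCompact K) {f : ℝ × V3 → ℝ} (h : ZZ a b K f)
    {t : ℝ} (ht : t ∈ Set.Ioo a b) : HasCompactSupport (fun x : V3 => f (t, x)) :=
  HasCompactSupport.intro hK (fun x hx => h t ht x hx)

lemma slice_int {a b : ℝ} {K : Set V3} (hK : IsCompact K) {f : ℝ × V3 → ℝ} (h : ZZ a b K f)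
    (hf : Continuous f) {t : ℝ} (ht : t ∈ Set.Ioo a b) : Integrable (fun x : V3 => f (t, x)) :=
  (hf.comp (by fun_prop : Continuous fun x : V3 => (t, x))).integrable_of_hasCompactSupport
    (slice_cs hK h ht)

lemma int_DD_zero {a b : ℝ} {K : Set V3} (hK : IsCompact K) {f : ℝ × V3 → ℝ} (h : ZZ a b K f)
    (hf : ContDiff ℝ 1 f) {t : ℝ} (ht : t ∈ Set.Ioo a b) (w : V3) :
    ∫ x : V3, DD (0, w) f (t, x) = 0 := by
  have hs : ∀ x : V3, fderiv ℝ (fun y : V3 => f (t, y)) x w = DD (0, w) f (t, x) := by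
    intro x
    have h1 := ((hf.differentiable one_ne_zero) (t, x)).hasFDerivAt
    have h2 := h1.comp x (hasFDerivAt_prodMk_right t x)
    have h3 : fderiv ℝ (fun y : V3 => f (t, y)) x = _ := h2.fderiv
    rw [h3]
    simp [DD]
  have hi1 := slice_int hK h hf.continuous ht
  have hi2 := slice_int hK (h.DD hK (0, w)) (DD_cont hf _) ht
  have := integral_mul_fderiv_eq_neg_fderiv_mul_of_integrable (μ := (volume : Measure V3))
    (f := fun _ => (1 : ℝ)) (g := fun y : V3 => f (t, y)) (v := w)
    (by simp) (by simpa [hs] using hi2) (by simpa using hi1)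
    (fun x _ => by fun_prop)
    (fun x _ => ((hf.differentiable one_ne_zero).comp (by fun_prop : Differentiable ℝ fun y : V3 => (t, y))) x)
  simpa [hs] using this

lemma deriv_int {a b : ℝ} {K : Set V3} (hK : IsCompact K) {f : ℝ × V3 → ℝ} (h : ZZ a b K f)
    (hf : ContDiff ℝ 1 f) {t : ℝ} (ht : t ∈ Set.Ioo a b) :
    HasDerivAt (fun s => ∫ x : V3, f (s, x)) (∫ x : V3, DD (1, 0) f (t, x)) t := by
  obtain ⟨a', ha', hat⟩ := exists_between ht.1
  obtain ⟨b', htb, hb'⟩ := exists_between ht.2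
  have hsub : Set.Icc a' b' ⊆ Set.Ioo a b := fun s hs => ⟨ha'.trans_le hs.1, hs.2.trans_lt hb'⟩
  obtain ⟨M, hM⟩ := (isCompact_Icc (a := a') (b := b')).prod hK |>.exists_bound_of_continuousOn
    (DD_cont hf (1, 0)).continuousOn
  have hc : ∀ s : ℝ, Continuous fun x : V3 => (s, x) := fun s => by fun_prop
  refine (hasDerivAt_integral_of_dominated_loc_of_deriv_le (s := Set.Icc a' b')
    (F := fun s x => f (s, x)) (F' := fun s x => DD (1, 0) f (s, x))
    (bound := K.indicator fun _ => M)
    (Icc_mem_nhds hat htb) (Filter.Eventually.of_forall fun s =>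
      (hf.continuous.comp (hc s)).aestronglyMeasurable) (slice_int hK h hf.continuous ht)
    ((DD_cont hf _).comp (hc t)).aestronglyMeasurable
    (Filter.Eventually.of_forall fun x s hs => ?_) ?_
    (Filter.Eventually.of_forall fun x s hs => ?_)).2
  · by_cases hx : x ∈ K
    · rw [Set.indicator_of_mem hx]
      exact hM (s, x) (Set.mk_mem_prod hs hx)
    · rw [Set.indicator_of_notMem hx, h.DD hK _ s (hsub hs) x hx]
      simp
  · rw [integrable_indicator_iff hK.isClosed.measurableSet]
    exact integrableOn_const hK.measure_lt_top.ne
  · have h1 := ((hf.differentiable one_ne_zero) (s, x)).hasFDerivAt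
    exact h1.comp_hasDerivAt s ((hasDerivAt_id s).prodMk (hasDerivAt_const s x))

/-- In a non-relativistic (γ ≡ 1) barotropic fluid, ℰ + (v/c)×ℬ = −c⁻¹∇θ implies that
    the helicity C(t) = ∫ 𝓐·ℬ d³x is constant. -/
theorem helicity_conservation_nonrelativistic_barotropic (c : ℝ) (hc : 0 < c)
    (A0 : ℝ × V3 → ℝ) (A : ℝ × V3 → V3) (θ : ℝ × V3 → ℝ) (v : ℝ × V3 → V3)
    (hA0 : ContDiff ℝ 2 A0) (hA : ContDiff ℝ 2 A) (hθ : ContDiff ℝ 1 θ)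
    (a b : ℝ) (𝒦 : Set V3) (h𝒦 : IsCompact 𝒦)
    (hsupp : ∀ t ∈ Set.Ioo a b, ∀ x : V3, x ∉ 𝒦 → A (t, x) = 0)
    (heqm : ∀ p, ∀ i : Fin 3,
      Efield c A0 A p i + cross3 (v p) (Bfield A p) i / c = -c⁻¹ * grad3 θ p i) :
    ∀ t₁ ∈ Set.Ioo a b, ∀ t₂ ∈ Set.Ioo a b,
      semiHelicity A t₁ = semiHelicity A t₂ := by
  set u : Fin 3 → ℝ × V3 → ℝ := fun i q => A q i with hu
  set e : Fin 3 → ℝ × V3 := fun j => ((0 : ℝ), Pi.single j 1) with he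
  set τ : ℝ × V3 := (1, 0) with hτ
  have u2 : ∀ i, ContDiff ℝ 2 (u i) := fun i => contDiff_pi.1 hA i
  have u1 : ∀ i, ContDiff ℝ 1 (u i) := fun i => (u2 i).of_le (by norm_num)
  have uZ : ∀ i, ZZ a b 𝒦 (u i) := fun i t ht x hx => by simp [hu, hsupp t ht x hx]
  have d1 : ∀ w i, ContDiff ℝ 1 (DD w (u i)) := fun w i => DD_contDiff (u2 i) w
  have dZ : ∀ w i, ZZ a b 𝒦 (DD w (u i)) := fun w i => (uZ i).DD h𝒦 w
  set B : Fin 3 → ℝ × V3 → ℝ := fun i q =>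
    DD (e (i + 1)) (u (i + 2)) q - DD (e (i + 2)) (u (i + 1)) q with hB
  have B1 : ∀ i, ContDiff ℝ 1 (B i) := fun i => (d1 _ _).sub (d1 _ _)
  have BZ : ∀ i, ZZ a b 𝒦 (B i) := fun i t ht x hx => by
    simp only [hB, dZ _ _ t ht x hx, sub_zero]
  set φ : ℝ × V3 → ℝ := fun q => θ q - c * A0 q with hφ
  have A01 : ContDiff ℝ 1 A0 := hA0.of_le (by norm_num)
  have φ1 : ContDiff ℝ 1 φ := hθ.sub (contDiff_const.mul A01)
  have φ2 : ContDiff ℝ 1 (fun q => 2 * φ q) := contDiff_const.mul φ1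
  set h : ℝ × V3 → ℝ := fun q => (u 0 q * B 0 q + u 1 q * B 1 q) + u 2 q * B 2 q with hh
  have m1 : ∀ i, ContDiff ℝ 1 (fun q => u i q * B i q) := fun i => (u1 i).mul (B1 i)
  have h1 : ContDiff ℝ 1 h := ((m1 0).add (m1 1)).add (m1 2)
  have hZ : ZZ a b 𝒦 h := fun t ht x hx => by
    simp only [hh, BZ _ t ht x hx, mul_zero, add_zero]
  set F : Fin 3 → ℝ × V3 → ℝ := fun i q => (2 * φ q) * B i q +
    (DD τ (u (i + 1)) q * u (i + 2) q - DD τ (u (i + 2)) q * u (i + 1) q) with hF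
  have n1 : ∀ i j, ContDiff ℝ 1 (fun q => DD τ (u i) q * u j q) := fun i j => (d1 _ i).mul (u1 j)
  have nn1 : ∀ i j, ContDiff ℝ 1 (fun q => DD τ (u i) q * u j q - DD τ (u j) q * u i q) :=
    fun i j => (n1 i j).sub (n1 j i)
  have p1 : ∀ i, ContDiff ℝ 1 (fun q => (2 * φ q) * B i q) := fun i => φ2.mul (B1 i)
  have F1 : ∀ i, ContDiff ℝ 1 (F i) := fun i => (p1 i).add (nn1 _ _)
  have FZ : ∀ i, ZZ a b 𝒦 (F i) := fun i t ht x hx => by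
    simp only [hF, BZ _ t ht x hx, uZ _ t ht x hx, mul_zero, add_zero, sub_zero]
  have hBB : ∀ p i, Bfield A p i = B i p := fun p i => rfl
  have hsemi : ∀ t, semiHelicity A t = ∫ x : V3, h (t, x) := by
    intro t
    simp only [semiHelicity, dot3, Fin.sum_univ_three, hBB]
    rfl
  have hDφ : ∀ w p, DD w φ p = DD w θ p - c * DD w A0 p := fun w p => by
    rw [hφ, DD_sub hθ (contDiff_const.mul A01), DD_const_mul A01]
  have eom : ∀ p i, DD τ (u i) p = DD (e i) φ p + cross3 (v p) (Bfield A p) i := by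
    intro p i
    have := heqm p i
    have h2 : Efield c A0 A p i = - DD (e i) A0 p - c⁻¹ * DD τ (u i) p := rfl
    have h3 : grad3 θ p i = DD (e i) θ p := rfl
    rw [h2, h3] at this
    rw [hDφ]
    field_simp at this
    linarith
  have key : ∀ p, DD τ h p = (DD (e 0) (F 0) p + DD (e 1) (F 1) p) + DD (e 2) (F 2) p := by
    intro p
    have hDh : DD τ h p = (DD τ (fun q => u 0 q * B 0 q) p + DD τ (fun q => u 1 q * B 1 q) p)
        + DD τ (fun q => u 2 q * B 2 q) p := by
      rw [hh, DD_add ((m1 0).add (m1 1)) (m1 2), DD_add (m1 0) (m1 1)]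
    have hDB : ∀ w i, DD w (B i) p =
        DD w (DD (e (i + 1)) (u (i + 2))) p - DD w (DD (e (i + 2)) (u (i + 1))) p :=
      fun w i => DD_sub (d1 _ _) (d1 _ _) w p
    have hDF : ∀ w i, DD w (F i) p = ((2 * φ p) * DD w (B i) p + (2 * DD w φ p) * B i p) +
        ((DD τ (u (i + 1)) p * DD w (u (i + 2)) p + DD w (DD τ (u (i + 1))) p * u (i + 2) p) -
        (DD τ (u (i + 2)) p * DD w (u (i + 1)) p + DD w (DD τ (u (i + 2))) p * u (i + 1) p)) := by
      intro w i
      simp only [hF]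
      rw [DD_add (p1 i) (nn1 _ _), DD_mul φ2 (B1 i), DD_const_mul φ1, DD_sub (n1 _ _) (n1 _ _),
        DD_mul (d1 _ _) (u1 _), DD_mul (d1 _ _) (u1 _)]
    have c0 := fun i j => DD_comm (u2 i) τ (e j) p
    have c1 := fun i => DD_comm (u2 i) (e 0) (e 1) p
    have c2 := fun i => DD_comm (u2 i) (e 0) (e 2) p
    have c3 := fun i => DD_comm (u2 i) (e 1) (e 2) p
    have e0 := eom p 0
    have e1 := eom p 1
    have e2 := eom p 2
    have f1 : (1 : Fin 3) + 1 = 2 := rfl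
    have f2 : (1 : Fin 3) + 2 = 0 := rfl
    have f3 : (2 : Fin 3) + 1 = 0 := rfl
    have f4 : (2 : Fin 3) + 2 = 1 := rfl
    simp only [cross3, hBB, zero_add, f1, f2, f3, f4] at e0 e1 e2
    have orth : DD τ (u 0) p * B 0 p + DD τ (u 1) p * B 1 p + DD τ (u 2) p * B 2 p =
        DD (e 0) φ p * B 0 p + DD (e 1) φ p * B 1 p + DD (e 2) φ p * B 2 p := by
      rw [e0, e1, e2]; ring
    have b0 : B 0 p = DD (e 1) (u 2) p - DD (e 2) (u 1) p := rfl
    have b1 : B 1 p = DD (e 2) (u 0) p - DD (e 0) (u 2) p := rfl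
    have b2 : B 2 p = DD (e 0) (u 1) p - DD (e 1) (u 0) p := rfl
    rw [hDh, DD_mul (u1 0) (B1 0), DD_mul (u1 1) (B1 1), DD_mul (u1 2) (B1 2)]
    simp only [hDF, hDB, zero_add, f1, f2, f3, f4, c0, c1, c2, c3]
    clear_value B
    rw [b0, b1, b2] at orth ⊢
    linear_combination 2 * orth
  have hder : ∀ t ∈ Set.Ioo a b, HasDerivAt (semiHelicity A) 0 t := by
    intro t ht
    have h2 := deriv_int h𝒦 hZ h1 ht
    have hi : ∀ i, Integrable (fun x : V3 => DD (e i) (F i) (t, x)) := fun i =>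
      slice_int h𝒦 ((FZ i).DD h𝒦 _) (DD_cont (F1 i) _) ht
    have hz : ∀ i, ∫ x : V3, DD (e i) (F i) (t, x) = 0 := fun i =>
      int_DD_zero h𝒦 (FZ i) (F1 i) ht _
    have h3 : ∫ x : V3, DD (1, 0) h (t, x) = 0 := by
      rw [← hτ]
      simp only [key]
      have hi01 : Integrable (fun x : V3 => DD (e 0) (F 0) (t, x) + DD (e 1) (F 1) (t, x)) :=
        (hi 0).add (hi 1)
      rw [integral_add hi01 (hi 2), integral_add (hi 0) (hi 1), hz, hz, hz]
      simp
    rw [h3] at h2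
    rwa [show semiHelicity A = fun s => ∫ x : V3, h (s, x) from funext hsemi]
  intro t₁ ht₁ t₂ ht₂
  exact isOpen_Ioo.is_const_of_deriv_eq_zero isPreconnected_Ioo
    (fun t ht => (hder t ht).differentiableAt.differentiableWithinAt)
    (fun t ht => (hder t ht).deriv) ht₁ ht₂
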